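/- Let (X₁,Y₁),…,(X_m,Y_m) be i.i.d. with law P_S with E_S[Y⁴] < ∞, and let ε₁,…,ε_m be i.i.d. uniform on {−1,1}, independent of the sample. Let w₀ : 𝒳 → [0, W] be measurable, let δ > 0, and suppose B > 0 is such that Y² − f(X) ≤ B almost surely under P_S for every f ∈ 𝓕. Then E[sup_{f∈𝓕} |(1/m) Σᵢ εᵢ·w₀(Xᵢ)·h_δ(Yᵢ² − f(Xᵢ))|] ≤ 2√2·((B + W + δ)/δ)·(‖w₀‖_{L²(ν_S)}/√m + √(E_S[Y⁴]/m) + R_m(𝓕)), where ‖w₀‖_{L²(ν_S)} is the L² norm of w₀ under the covariate marginal of P_S and R_m(𝓕) = E[sup_{f∈𝓕} |(1/m) Σᵢ εᵢ f(Xᵢ)|]. -/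

import Mathlib

/-!
The weighted hinge `u ↦ w · h_δ(u)` splits as `w + w · (h_δ(u) - 1)`, where `1 = h_δ(0)`.
The first summand does not depend on `f` and contributes `E|(1/m) Σ εᵢ w₀(Xᵢ)|`, at most
`‖w₀‖ / √m`. The second vanishes at `u = 0` and is `W/δ`-Lipschitz in `u`, so, conditionally on the
sample, the Ledoux–Talagrand contraction principle for absolute values (`abs_contraction`) bounds
its contribution by `2 W/δ` times the Rademacher average of `u = Y² - f(X)`, hence by
`2 W/δ` times the sum of `E|(1/m) Σ εᵢ Yᵢ²| ≤ √(E[Y⁴]/m)` and `R_m(𝓕)`. Both coefficients `1` and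
`2 W/δ` are at most `2√2 (B + W + δ)/δ`.

The sample-wise estimate is `hinge_pointwise'`. Averages over the signs are written as finite sums
over `Fin m → Bool` (`integral_prod_signs`), and the second-moment bounds combine the
orthogonality of the signs (`sum_signs_abs_le`) with Jensen's inequality over the sample
(`integral_sqrt_sum_sq_le`).
-/

open MeasureTheory

/-- Rademacher complexity of a class `𝓖` of real functions with respect to `n` i.i.d.
points drawn from `ν`. -/
noncomputable def rademacher {𝒳 : Type*} [MeasurableSpace 𝒳]
    (n : ℕ) (𝓖 : Set (𝒳 → ℝ)) (ν : Measure 𝒳) : ℝ :=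
  ∫ p : (Fin n → 𝒳) × (Fin n → Bool),
    sSup ((fun g : 𝒳 → ℝ =>
      |(1 / n : ℝ) * ∑ j, (if p.2 j then (1 : ℝ) else -1) * g (p.1 j)|) '' 𝓖)
    ∂((Measure.pi fun _ : Fin n => ν).prod
        (Measure.pi fun _ : Fin n => (PMF.uniformOfFintype Bool).toMeasure))

/-! ### Sums over signs -/

/-- The sign in `{-1, 1}` encoded by a Boolean. -/
noncomputable def sgn (b : Bool) : ℝ := if b then 1 else -1

lemma sgn_not (b : Bool) : sgn (!b) = -sgn b := by cases b <;> simp [sgn]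

lemma abs_sgn (b : Bool) : |sgn b| = 1 := by cases b <;> simp [sgn]

/-- Splits off the sign of index `0`, the induction step for all averages over signs. -/
lemma sum_signs_succ (m : ℕ) (F : (Fin (m + 1) → Bool) → ℝ) :
    ∑ e, F e = ∑ e : Fin m → Bool, (F (Fin.cons true e) + F (Fin.cons false e)) := by
  rw [← (Fin.consEquiv fun _ : Fin (m + 1) => Bool).sum_comp, Fintype.sum_prod_type,
    Fintype.sum_bool, ← Finset.sum_add_distrib]
  rfl

/-- Orthogonality of independent signs: the cross terms of the square average to zero. -/
lemma sum_signs_sq (m : ℕ) (a : Fin m → ℝ) :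
    ∑ e : Fin m → Bool, (∑ i, sgn (e i) * a i) ^ 2 = 2 ^ m * ∑ i, a i ^ 2 := by
  induction m with
  | zero => simp
  | succ m ih =>
    rw [sum_signs_succ]
    simp only [Fin.sum_univ_succ, Fin.cons_zero, Fin.cons_succ]
    have h : ∀ e : Fin m → Bool,
        (sgn true * a 0 + ∑ i, sgn (e i) * a i.succ) ^ 2
          + (sgn false * a 0 + ∑ i, sgn (e i) * a i.succ) ^ 2
        = 2 * a 0 ^ 2 + 2 * (∑ i, sgn (e i) * a i.succ) ^ 2 := by
      intro e; simp [sgn]; ring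
    simp only [h, Finset.sum_add_distrib, ← Finset.mul_sum, ih (fun i => a i.succ)]
    simp
    ring

lemma sum_signs_abs_le (m : ℕ) (a : Fin m → ℝ) :
    ∑ e : Fin m → Bool, |∑ i, sgn (e i) * a i| ≤ 2 ^ m * √(∑ i, a i ^ 2) := by
  have h := sq_sum_le_card_mul_sum_sq (s := (Finset.univ : Finset (Fin m → Bool)))
    (f := fun e => |∑ i, sgn (e i) * a i|)
  simp only [sq_abs, sum_signs_sq] at h
  have hc : ((Finset.univ : Finset (Fin m → Bool)).card : ℝ) = 2 ^ m := by simp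
  rw [hc] at h
  refine (pow_le_pow_iff_left₀ (by positivity) (by positivity) two_ne_zero).mp ?_
  rw [mul_pow, Real.sq_sqrt (by positivity)]
  linarith

lemma abs_signed_sum_le {m : ℕ} {C : ℝ} {a : Fin m → ℝ} (ha : ∀ i, |a i| ≤ C)
    (e : Fin m → Bool) : |∑ i, sgn (e i) * a i| ≤ m * C := by
  refine (Finset.abs_sum_le_sum_abs _ _).trans ?_
  simp only [abs_mul, abs_sgn, one_mul]
  refine (Finset.sum_le_sum fun i _ => ha i).trans ?_
  simp

/-! ### The contraction principle -/

lemma bddAbove_range_of_abs {ι : Type*} {g : ι → ℝ} {C : ℝ} (h : ∀ s, |g s| ≤ C) :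
    BddAbove (Set.range g) :=
  ⟨C, by rintro _ ⟨s, rfl⟩; exact (abs_le.mp (h s)).2⟩

/-- The contraction principle for a single sign. For each pair `s, t` the sum of the two terms on
the left is at most `A s + A t + |u s - u t|`, which is the value of
the right-hand expression at `(s, t)` or at `(t, s)`. -/
lemma contraction_step {ι : Type*} [Nonempty ι] {A u v : ι → ℝ} {C D : ℝ}
    (hA : ∀ s, |A s| ≤ C) (hu : ∀ s, |u s| ≤ D) (huv : ∀ s t, |v s - v t| ≤ |u s - u t|) :
    (⨆ s, (A s + sgn true * v s)) + (⨆ s, (A s + sgn false * v s))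
      ≤ (⨆ s, (A s + sgn true * u s)) + ⨆ s, (A s + sgn false * u s) := by
  have hb : ∀ b, BddAbove (Set.range fun s => A s + sgn b * u s) := fun b =>
    bddAbove_range_of_abs (C := C + D) fun s => by
      refine (abs_add_le _ _).trans ?_
      rw [abs_mul, abs_sgn, one_mul]
      exact add_le_add (hA s) (hu s)
  have key : ∀ s t, (A s + sgn true * v s) + (A t + sgn false * v t)
      ≤ (⨆ s, (A s + sgn true * u s)) + ⨆ s, (A s + sgn false * u s) := by
    intro s t
    have h1 := le_ciSup (hb true) s
    have h2 := le_ciSup (hb false) t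
    have h3 := le_ciSup (hb true) t
    have h4 := le_ciSup (hb false) s
    have h5 := (le_abs_self _).trans (huv s t)
    simp only [sgn] at h1 h2 h3 h4 ⊢
    simp only [if_true, Bool.false_eq_true, if_false] at h1 h2 h3 h4 ⊢
    rcases abs_cases (u s - u t) with ⟨h, _⟩ | ⟨h, _⟩ <;> rw [h] at h5 <;> linarith
  rw [← le_sub_iff_add_le]
  refine ciSup_le fun s => ?_
  rw [le_sub_comm]
  refine ciSup_le fun t => ?_
  linarith [key s t]

/-- Contraction principle without absolute values, with an arbitrary bounded offset `A` so that
the signs can be treated one at a time. The boundedness hypotheses keep the real suprema away from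
their junk value. -/
lemma contraction (m : ℕ) {ι : Type*} [Nonempty ι] {A : ι → ℝ} {u v : ι → Fin m → ℝ} {C D : ℝ}
    (hA : ∀ s, |A s| ≤ C) (hu : ∀ s i, |u s i| ≤ D) (hv : ∀ s i, |v s i| ≤ D)
    (huv : ∀ s t i, |v s i - v t i| ≤ |u s i - u t i|) :
    ∑ e : Fin m → Bool, (⨆ s, (A s + ∑ i, sgn (e i) * v s i))
      ≤ ∑ e : Fin m → Bool, ⨆ s, (A s + ∑ i, sgn (e i) * u s i) := by
  induction m generalizing A C with
  | zero => simp
  | succ m ih =>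
    have hE : ∀ b, ∑ e : Fin m → Bool,
          (⨆ s, ((A s + sgn b * v s 0) + ∑ i, sgn (e i) * v s i.succ))
        ≤ ∑ e : Fin m → Bool,
          (⨆ s, ((A s + sgn b * v s 0) + ∑ i, sgn (e i) * u s i.succ)) := fun b =>
      ih (C := C + D) (u := fun s i => u s i.succ) (v := fun s i => v s i.succ)
        (fun s => by
          refine (abs_add_le _ _).trans ?_
          rw [abs_mul, abs_sgn, one_mul]
          exact add_le_add (hA s) (hv s 0))
        (fun s i => hu s i.succ) (fun s i => hv s i.succ) (fun s t i => huv s t i.succ)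
    have hS : ∀ e : Fin m → Bool,
        (⨆ s, ((A s + sgn true * v s 0) + ∑ i, sgn (e i) * u s i.succ))
          + (⨆ s, ((A s + sgn false * v s 0) + ∑ i, sgn (e i) * u s i.succ))
        ≤ (⨆ s, (A s + (sgn true * u s 0 + ∑ i, sgn (e i) * u s i.succ)))
          + ⨆ s, (A s + (sgn false * u s 0 + ∑ i, sgn (e i) * u s i.succ)) := by
      intro e
      have h := contraction_step (A := fun s => A s + ∑ i, sgn (e i) * u s i.succ)
        (u := fun s => u s 0) (v := fun s => v s 0) (C := C + m * D) (D := D)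
        (fun s => (abs_add_le _ _).trans
          (add_le_add (hA s) (abs_signed_sum_le (fun i => hu s i.succ) e)))
        (fun s => hu s 0) (fun s t => huv s t 0)
      simpa only [add_assoc, add_comm, add_left_comm] using h
    rw [sum_signs_succ, sum_signs_succ]
    simp only [Fin.sum_univ_succ, Fin.cons_zero, Fin.cons_succ]
    refine le_trans ?_ (Finset.sum_le_sum fun e _ => hS e)
    rw [Finset.sum_add_distrib, Finset.sum_add_distrib]
    simpa only [add_assoc] using add_le_add (hE true) (hE false)

/-- Contraction principle with absolute values. Adjoining the zero vector to the index set makes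
the one-sided supremum `P` nonnegative, so `sup |Σ ε v| ≤ P ε + P (-ε)`; the symmetry of the signs
gives the factor `2`. -/
lemma abs_contraction (m : ℕ) {ι : Type*} [Nonempty ι] {u v : ι → Fin m → ℝ} {D : ℝ}
    (hu : ∀ s i, |u s i| ≤ D) (hv : ∀ s i, |v s i| ≤ |u s i|)
    (huv : ∀ s t i, |v s i - v t i| ≤ |u s i - u t i|) :
    ∑ e : Fin m → Bool, (⨆ s, |∑ i, sgn (e i) * v s i|)
      ≤ 2 * ∑ e : Fin m → Bool, ⨆ s, |∑ i, sgn (e i) * u s i| := by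
  let u' : Option ι → Fin m → ℝ := fun o => o.elim 0 u
  let v' : Option ι → Fin m → ℝ := fun o => o.elim 0 v
  have hu' : ∀ o i, |u' o i| ≤ max D 0 := by
    rintro (_ | s) i
    · simp [u']
    · exact (hu s i).trans (le_max_left _ _)
  have hvu' : ∀ o i, |v' o i| ≤ |u' o i| := by
    rintro (_ | s) i
    · simp [u', v']
    · exact hv s i
  have hv' : ∀ o i, |v' o i| ≤ max D 0 := fun o i => (hvu' o i).trans (hu' o i)
  have huv' : ∀ o p i, |v' o i - v' p i| ≤ |u' o i - u' p i| := by
    rintro (_ | s) (_ | t) i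
    · simp [u', v']
    · simpa [u', v'] using hv t i
    · simpa [u', v'] using hv s i
    · exact huv s t i
  have hc := contraction m (A := fun _ : Option ι => (0 : ℝ)) (C := 0) (by simp) hu' hv' huv'
  simp only [zero_add] at hc
  set P : (Fin m → Bool) → ℝ := fun e => ⨆ o, ∑ i, sgn (e i) * v' o i with hP
  have hPle : ∀ e o, ∑ i, sgn (e i) * v' o i ≤ P e := fun e o =>
    le_ciSup (bddAbove_range_of_abs fun o => abs_signed_sum_le (hv' o) e) o
  have hP0 : ∀ e, 0 ≤ P e := fun e => by simpa [v'] using hPle e none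
  have hneg : ∑ e : Fin m → Bool, P (fun i => !(e i)) = ∑ e, P e :=
    (Equiv.piCongrRight fun _ : Fin m => Equiv.boolNot).sum_comp P
  have h1 : ∀ e, (⨆ s, |∑ i, sgn (e i) * v s i|) ≤ P e + P (fun i => !(e i)) := by
    intro e
    refine ciSup_le fun s => abs_le'.mpr ⟨?_, ?_⟩
    · linarith [hPle e (some s), hP0 (fun i => !(e i)),
        show ∑ i, sgn (e i) * v' (some s) i = ∑ i, sgn (e i) * v s i from rfl]
    · have h := hPle (fun i => !(e i)) (some s)
      simp only [sgn_not, neg_mul, Finset.sum_neg_distrib] at h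
      linarith [hP0 e,
        show ∑ i, sgn (e i) * v' (some s) i = ∑ i, sgn (e i) * v s i from rfl]
  have h2 : ∀ e : Fin m → Bool, (⨆ o, ∑ i, sgn (e i) * u' o i)
      ≤ ⨆ s, |∑ i, sgn (e i) * u s i| := by
    intro e
    refine ciSup_le ?_
    rintro (_ | s)
    · simpa [u'] using Real.iSup_nonneg fun s => abs_nonneg (∑ i, sgn (e i) * u s i)
    · refine (le_abs_self _).trans (le_ciSup (f := fun s => |∑ i, sgn (e i) * u s i|)
        (bddAbove_range_of_abs (C := m * D) fun s => ?_) s)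
      rw [abs_abs]
      exact abs_signed_sum_le (hu s) e
  calc _ ≤ ∑ e, (P e + P (fun i => !(e i))) := Finset.sum_le_sum fun e _ => h1 e
    _ = 2 * ∑ e, P e := by rw [Finset.sum_add_distrib, hneg]; ring
    _ ≤ _ := by
      refine mul_le_mul_of_nonneg_left (hc.trans (Finset.sum_le_sum fun e _ => h2 e)) (by norm_num)

/-- The sample-wise bound for a fixed sample, where `w`, `z`, `t s` stand for the values of `w₀`,
`Y²` and `f`, and `abs_contraction` is applied to `u = (W/δ)(z - t)` and `v = w (h_δ(z - t) - 1)`. -/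
lemma hinge_pointwise (m : ℕ) {ι : Type*} [Nonempty ι] {t : ι → Fin m → ℝ} {w z : Fin m → ℝ}
    {W δ C : ℝ} (hδ : 0 < δ) (hW : 0 ≤ W) (hw0 : ∀ i, 0 ≤ w i) (hwW : ∀ i, w i ≤ W)
    (ht : ∀ s i, |t s i| ≤ C) :
    ∑ e : Fin m → Bool, (⨆ s, |∑ i, sgn (e i) * (w i * max 0 ((z i - t s i) / δ + 1))|)
      ≤ (∑ e : Fin m → Bool, |∑ i, sgn (e i) * w i|)
        + 2 * (W / δ) * ((∑ e : Fin m → Bool, |∑ i, sgn (e i) * z i|)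
          + ∑ e : Fin m → Bool, ⨆ s, |∑ i, sgn (e i) * t s i|) := by
  set L : ℝ := W / δ with hL
  have hL0 : 0 ≤ L := by positivity
  let u : ι → Fin m → ℝ := fun s i => L * (z i - t s i)
  let v : ι → Fin m → ℝ := fun s i => w i * (max 0 ((z i - t s i) / δ + 1) - 1)
  have hu : ∀ s i, |u s i| ≤ L * ((∑ j, |z j|) + C) := by
    intro s i
    simp only [u, abs_mul, abs_of_nonneg hL0]
    refine mul_le_mul_of_nonneg_left ((abs_sub _ _).trans (add_le_add ?_ (ht s i))) hL0
    exact Finset.single_le_sum (f := fun j => |z j|) (fun j _ => abs_nonneg _) (Finset.mem_univ i)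
  have hlip : ∀ (i : Fin m) (a b : ℝ),
      |w i * (max 0 (a / δ + 1) - 1) - w i * (max 0 (b / δ + 1) - 1)| ≤ |L * a - L * b| := by
    intro i a b
    rw [← mul_sub, sub_sub_sub_cancel_right, abs_mul, abs_of_nonneg (hw0 i), ← mul_sub, abs_mul,
      abs_of_nonneg hL0]
    have h : |max 0 (a / δ + 1) - max 0 (b / δ + 1)| ≤ |a - b| / δ := by
      refine (abs_max_sub_max_le_max _ _ _ _).trans ?_
      rw [add_sub_add_right_eq_sub, ← sub_div, abs_div, abs_of_pos hδ, sub_self, abs_zero]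
      exact max_le (by positivity) le_rfl
    calc _ ≤ W * (|a - b| / δ) := mul_le_mul (hwW i) h (abs_nonneg _) hW
      _ = _ := by rw [hL]; ring
  have hv : ∀ s i, |v s i| ≤ |u s i| := by
    intro s i
    simpa [u, v] using hlip i (z i - t s i) 0
  have huv : ∀ s t i, |v s i - v t i| ≤ |u s i - u t i| := fun s s' i => hlip i _ _
  have hc := abs_contraction m hu hv huv
  have hsplit : ∀ e : Fin m → Bool,
      (⨆ s, |∑ i, sgn (e i) * (w i * max 0 ((z i - t s i) / δ + 1))|)
        ≤ |∑ i, sgn (e i) * w i| + ⨆ s, |∑ i, sgn (e i) * v s i| := by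
    intro e
    refine ciSup_le fun s => ?_
    have h1 : ∑ i, sgn (e i) * (w i * max 0 ((z i - t s i) / δ + 1))
        = ∑ i, sgn (e i) * w i + ∑ i, sgn (e i) * v s i := by
      rw [← Finset.sum_add_distrib]
      exact Finset.sum_congr rfl fun i _ => by simp only [v]; ring
    rw [h1]
    refine (abs_add_le _ _).trans (add_le_add le_rfl ?_)
    refine le_ciSup (f := fun s => |∑ i, sgn (e i) * v s i|)
      (bddAbove_range_of_abs (C := m * (L * ((∑ j, |z j|) + C))) fun s => ?_) s
    rw [abs_abs]
    exact abs_signed_sum_le (fun i => (hv s i).trans (hu s i)) e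
  have hu2 : ∀ e : Fin m → Bool, (⨆ s, |∑ i, sgn (e i) * u s i|)
      ≤ L * (|∑ i, sgn (e i) * z i| + ⨆ s, |∑ i, sgn (e i) * t s i|) := by
    intro e
    refine ciSup_le fun s => ?_
    have h1 : ∑ i, sgn (e i) * u s i
        = L * (∑ i, sgn (e i) * z i - ∑ i, sgn (e i) * t s i) := by
      rw [← Finset.sum_sub_distrib, Finset.mul_sum]
      exact Finset.sum_congr rfl fun i _ => by simp only [u]; ring
    rw [h1, abs_mul, abs_of_nonneg hL0]
    refine mul_le_mul_of_nonneg_left ((abs_sub _ _).trans (add_le_add le_rfl ?_)) hL0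
    refine le_ciSup (f := fun s => |∑ i, sgn (e i) * t s i|)
      (bddAbove_range_of_abs (C := m * C) fun s => ?_) s
    rw [abs_abs]
    exact abs_signed_sum_le (ht s) e
  refine (Finset.sum_le_sum fun e _ => hsplit e).trans ?_
  rw [Finset.sum_add_distrib]
  refine add_le_add le_rfl (hc.trans ?_)
  rw [mul_assoc]
  refine mul_le_mul_of_nonneg_left ((Finset.sum_le_sum fun e _ => hu2 e).trans_eq ?_) (by norm_num)
  rw [← Finset.mul_sum, Finset.sum_add_distrib]

/-- Normalized form of `hinge_pointwise`, with the sign averages of `w` and `z` replaced by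
Euclidean norms; the index set may be empty, as then the left side is `0`. -/
lemma hinge_pointwise' {m : ℕ} {ι : Type*} {t : ι → Fin m → ℝ} {w z : Fin m → ℝ}
    {W δ C : ℝ} (hδ : 0 < δ) (hW : 0 ≤ W) (hw0 : ∀ i, 0 ≤ w i) (hwW : ∀ i, w i ≤ W)
    (ht : ∀ s i, |t s i| ≤ C) :
    (1 / 2 ^ m : ℝ) * ∑ e : Fin m → Bool,
        (⨆ s, |(1 / m : ℝ) * ∑ i, sgn (e i) * (w i * max 0 ((z i - t s i) / δ + 1))|)
      ≤ (1 / m : ℝ) * √(∑ i, w i ^ 2) + 2 * (W / δ) * ((1 / m : ℝ) * √(∑ i, z i ^ 2)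
          + (1 / 2 ^ m : ℝ) * ∑ e : Fin m → Bool, ⨆ s, |(1 / m : ℝ) * ∑ i, sgn (e i) * t s i|) := by
  have hn : (0 : ℝ) ≤ 1 / m := by positivity
  simp only [abs_mul (1 / m : ℝ), abs_of_nonneg hn, ← Real.mul_iSup_of_nonneg hn,
    ← Finset.mul_sum]
  have hT : 0 ≤ ∑ e : Fin m → Bool, ⨆ s, |∑ i, sgn (e i) * t s i| :=
    Finset.sum_nonneg fun e _ => Real.iSup_nonneg fun s => abs_nonneg _
  rcases isEmpty_or_nonempty ι with hι | hι
  · simp only [Real.iSup_of_isEmpty, Finset.sum_const_zero, mul_zero]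
    positivity
  have h := hinge_pointwise m (z := z) hδ hW hw0 hwW ht
  have hw := sum_signs_abs_le m w
  have hz := sum_signs_abs_le m z
  have hK : 0 ≤ 2 * (W / δ) := by positivity
  have h2 : (0 : ℝ) < 2 ^ m := by positivity
  have h3 := h.trans (add_le_add hw (mul_le_mul_of_nonneg_left (add_le_add hz le_rfl) hK))
  refine (mul_le_mul_of_nonneg_left (mul_le_mul_of_nonneg_left h3 hn)
    (by positivity : (0 : ℝ) ≤ 1 / 2 ^ m)).trans_eq ?_
  field_simp

/-! ### Integration over the signs and the sample -/

lemma integral_signs (m : ℕ) (F : (Fin m → Bool) → ℝ) :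
    ∫ e, F e ∂(Measure.pi fun _ : Fin m => (PMF.uniformOfFintype Bool).toMeasure)
      = (1 / 2 ^ m : ℝ) * ∑ e, F e := by
  rw [integral_fintype .of_finite, Finset.mul_sum]
  refine Finset.sum_congr rfl fun e _ => ?_
  simp [measureReal_def]

lemma integral_prod_signs {α : Type*} [MeasurableSpace α] (Q : Measure α) [IsProbabilityMeasure Q]
    (m : ℕ) (F : α × (Fin m → Bool) → ℝ) (hF : ∀ e, Integrable (fun x => F (x, e)) Q) :
    ∫ p, F p ∂(Q.prod (Measure.pi fun _ : Fin m => (PMF.uniformOfFintype Bool).toMeasure))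
      = ∫ x, (1 / 2 ^ m : ℝ) * ∑ e, F (x, e) ∂Q := by
  rw [integral_prod]
  · simp only [integral_signs]
    -- Writing `F` as a finite sum of products gives joint integrability.
  · have h : F = fun p => ∑ e, F (p.1, e) * (if p.2 = e then 1 else 0) := by
      funext p; simp
    rw [h]
    exact integrable_finsetSum _ fun e _ =>
      (hF e).mul_prod (Integrable.of_finite (f := fun e' => if e' = e then (1 : ℝ) else 0))

/-- Jensen's inequality for an i.i.d. sample, obtained from the nonnegativity of the variance of
the Euclidean norm of `(a (x i))ᵢ`. -/
lemma integral_sqrt_sum_sq_le {Ω : Type*} [MeasurableSpace Ω] (P : Measure Ω)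
    [IsProbabilityMeasure P] (m : ℕ) {a : Ω → ℝ}
    (ha : Integrable (fun p => a p ^ 2) P) :
    Integrable (fun x : Fin m → Ω => √(∑ i, a (x i) ^ 2)) (Measure.pi fun _ : Fin m => P)
      ∧ (1 / m : ℝ) * ∫ x : Fin m → Ω, √(∑ i, a (x i) ^ 2) ∂(Measure.pi fun _ : Fin m => P)
        ≤ √(∫ p, a p ^ 2 ∂P) / √m := by
  set Q := Measure.pi fun _ : Fin m => P
  set g : (Fin m → Ω) → ℝ := fun x => √(∑ i, a (x i) ^ 2) with hg
  have hI : ∀ i, Integrable (fun x : Fin m → Ω => a (x i) ^ 2) Q := fun i =>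
    integrable_comp_eval (μ := fun _ : Fin m => P) (i := i) (f := fun p => a p ^ 2) ha
  have hsq : ∀ x, g x ^ 2 = ∑ i, a (x i) ^ 2 := fun x => Real.sq_sqrt (by positivity)
  have hS : Integrable (fun x : Fin m → Ω => ∑ i, a (x i) ^ 2) Q :=
    integrable_finsetSum _ fun i _ => hI i
  have hgm : AEStronglyMeasurable g Q :=
    Real.continuous_sqrt.comp_aestronglyMeasurable hS.aestronglyMeasurable
  have hL : MemLp g 2 Q := (memLp_two_iff_integrable_sq hgm).mpr (by simpa only [hsq] using hS)
  refine ⟨hL.integrable one_le_two, ?_⟩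
  have hv := ProbabilityTheory.variance_nonneg g Q
  rw [ProbabilityTheory.variance_eq_sub hL] at hv
  have hE : ∫ x, (g ^ 2) x ∂Q = m * ∫ p, a p ^ 2 ∂P := by
    simp only [Pi.pow_apply, hsq]
    rw [integral_finsetSum _ fun i _ => hI i]
    have : ∀ i : Fin m, ∫ x : Fin m → Ω, a (x i) ^ 2 ∂Q = ∫ p, a p ^ 2 ∂P := fun i =>
      integral_comp_eval (μ := fun _ : Fin m => P) (i := i) (f := fun p => a p ^ 2) ha.aestronglyMeasurable
    simp [this]
  rw [hE, sub_nonneg] at hv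
  have h1 : ∫ x, g x ∂Q ≤ √m * √(∫ p, a p ^ 2 ∂P) := by
    rw [← Real.sqrt_mul (by positivity)]
    exact Real.le_sqrt_of_sq_le hv
  rcases Nat.eq_zero_or_pos m with rfl | hm
  · simp
  have hm' : (0 : ℝ) < √m := by positivity
  rw [le_div_iff₀ hm']
  calc _ ≤ (1 / m : ℝ) * (√m * √(∫ p, a p ^ 2 ∂P)) * √m := by gcongr
    _ = (√m * √m) / m * √(∫ p, a p ^ 2 ∂P) := by ring
    _ = _ := by rw [Real.mul_self_sqrt (by positivity), div_self (by positivity), one_mul]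

lemma integrable_sSup_abs {α ι : Type*} [MeasurableSpace α] {Q : Measure α} {s : Set ι}
    (hs : s.Countable) {G : ι → α → ℝ} {g : α → ℝ} (hG : ∀ i ∈ s, Measurable (G i))
    (hg : Integrable g Q) (hg0 : ∀ x, 0 ≤ g x) (hGg : ∀ i ∈ s, ∀ x, |G i x| ≤ g x) :
    Integrable (fun x => sSup ((fun i => |G i x|) '' s)) Q := by
  refine hg.mono' (Measurable.sSup hs fun i hi => (hG i hi).abs).aestronglyMeasurable
    (Filter.Eventually.of_forall fun x => ?_)
  have h0 : 0 ≤ sSup ((fun i => |G i x|) '' s) :=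
    Real.sSup_nonneg (by rintro _ ⟨i, _, rfl⟩; exact abs_nonneg _)
  rw [Real.norm_of_nonneg h0]
  exact Real.sSup_le (by rintro _ ⟨i, hi, rfl⟩; exact hGg i hi x) (hg0 x)

lemma abs_avg_signs_le {m : ℕ} (e : Fin m → Bool) (a : Fin m → ℝ) :
    |(1 / m : ℝ) * ∑ i, sgn (e i) * a i| ≤ (1 / m : ℝ) * ∑ i, |a i| := by
  rw [abs_mul, abs_of_nonneg (by positivity : (0 : ℝ) ≤ 1 / m)]
  refine mul_le_mul_of_nonneg_left ((Finset.abs_sum_le_sum_abs _ _).trans_eq ?_) (by positivity)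
  simp only [abs_mul, abs_sgn, one_mul]

/-- contraction bound for the Rademacher average of the weighted hinge
class `(x,y) ↦ w₀(x)·h_δ(y² − f(x))`, `f ∈ 𝓕`. -/
theorem stmt14 {𝒳 : Type*} [MeasurableSpace 𝒳]
    (P_S : Measure (𝒳 × ℝ)) [IsProbabilityMeasure P_S]
    (νS : Measure 𝒳) [IsProbabilityMeasure νS] (hνS : νS = P_S.map Prod.fst)
    (hY4 : Integrable (fun p : 𝒳 × ℝ => p.2 ^ 4) P_S)
    (w₀ : 𝒳 → ℝ) (W : ℝ) (hw₀m : Measurable w₀)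
    (hw₀0 : ∀ x, 0 ≤ w₀ x) (hw₀W : ∀ x, w₀ x ≤ W)
    (δ B : ℝ) (hδ : 0 < δ) (hB : 0 < B)
    (𝓕 : Set (𝒳 → ℝ)) (h𝓕c : 𝓕.Countable) (h𝓕m : ∀ f ∈ 𝓕, Measurable f)
    (B𝓕 : ℝ) (h𝓕b : ∀ f ∈ 𝓕, ∀ x, |f x| ≤ B𝓕)
    (hBbound : ∀ f ∈ 𝓕, ∀ᵐ p ∂P_S, p.2 ^ 2 - f p.1 ≤ B)
    (m : ℕ) (hm : 0 < m) :
    (∫ p : (Fin m → 𝒳 × ℝ) × (Fin m → Bool),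
        sSup ((fun f : 𝒳 → ℝ =>
          |(1 / m : ℝ) * ∑ i, (if p.2 i then (1 : ℝ) else -1) *
            (w₀ ((p.1 i).1) * max 0 ((((p.1 i).2) ^ 2 - f ((p.1 i).1)) / δ + 1))|) '' 𝓕)
        ∂((Measure.pi fun _ : Fin m => P_S).prod
            (Measure.pi fun _ : Fin m => (PMF.uniformOfFintype Bool).toMeasure)))
      ≤ 2 * Real.sqrt 2 * ((B + W + δ) / δ)
        * (Real.sqrt (∫ x, w₀ x ^ 2 ∂νS) / Real.sqrt m
            + Real.sqrt ((∫ p : 𝒳 × ℝ, p.2 ^ 4 ∂P_S) / m)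
            + rademacher m 𝓕 νS) := by
  obtain ⟨p₀⟩ : Nonempty (𝒳 × ℝ) := P_S.nonempty_of_neZero
  have hW : 0 ≤ W := (hw₀0 p₀.1).trans (hw₀W p₀.1)
  set Q : Measure (Fin m → 𝒳 × ℝ) := Measure.pi fun _ : Fin m => P_S with hQ
  have hmap : (Measure.pi fun _ : Fin m => νS) = Q.map (fun x i => (x i).1) := by
    subst hνS
    exact (Measure.pi_map_pi (μ := fun _ : Fin m => P_S) (f := fun _ => Prod.fst)
      fun i => measurable_fst.aemeasurable).symm
  have hproj : Measurable (fun (x : Fin m → 𝒳 × ℝ) i => (x i).1) := by fun_prop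
  have hw2 : Integrable (fun p : 𝒳 × ℝ => w₀ p.1 ^ 2) P_S := by
    refine Integrable.of_bound (C := W ^ 2)
      ((hw₀m.comp measurable_fst).pow_const 2).aestronglyMeasurable (Filter.Eventually.of_forall fun p => ?_)
    rw [Real.norm_of_nonneg (by positivity)]
    exact pow_le_pow_left₀ (hw₀0 _) (hw₀W _) 2
  have hy4 : Integrable (fun p : 𝒳 × ℝ => (p.2 ^ 2) ^ 2) P_S := by
    simpa only [← pow_mul] using hY4
  have hy2 : Integrable (fun p : 𝒳 × ℝ => p.2 ^ 2) P_S :=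
    ((memLp_two_iff_integrable_sq (by fun_prop)).mpr hy4).integrable one_le_two
  have hH1 : ∀ e : Fin m → Bool, Integrable (fun x : Fin m → 𝒳 × ℝ =>
      sSup ((fun f : 𝒳 → ℝ => |(1 / m : ℝ) * ∑ i, sgn (e i) *
        (w₀ (x i).1 * max 0 (((x i).2 ^ 2 - f (x i).1) / δ + 1))|) '' 𝓕)) Q := by
    intro e
    refine integrable_sSup_abs h𝓕c
      (g := fun x => (1 / m : ℝ) * ∑ i, W * (((x i).2 ^ 2 + |B𝓕|) / δ + 1)) ?_ ?_ ?_ ?_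
    · intro f hf
      have := h𝓕m f hf
      fun_prop
    · refine (integrable_finsetSum _ fun i _ => ?_).const_mul _
      exact integrable_comp_eval (μ := fun _ : Fin m => P_S) (i := i)
        (f := fun p : 𝒳 × ℝ => W * ((p.2 ^ 2 + |B𝓕|) / δ + 1))
        ((((hy2.add (integrable_const _)).div_const _).add (integrable_const _)).const_mul _)
    · intro x; positivity
    · intro f hf x
      refine (abs_avg_signs_le e _).trans ?_
      gcongr with i
      rw [abs_mul, abs_of_nonneg (hw₀0 _), abs_of_nonneg (le_max_left _ _)]
      have h1 : -f (x i).1 ≤ |B𝓕| :=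
        (neg_le_abs _).trans ((h𝓕b f hf _).trans (le_abs_self _))
      refine mul_le_mul (hw₀W _) (max_le (by positivity) ?_) (le_max_left _ _) hW
      gcongr
      linarith
  have hH2 : ∀ (e : Fin m → Bool) (ρ : Measure (Fin m → 𝒳)) [IsProbabilityMeasure ρ],
      Integrable (fun x : Fin m → 𝒳 => sSup ((fun f : 𝒳 → ℝ =>
        |(1 / m : ℝ) * ∑ i, sgn (e i) * f (x i)|) '' 𝓕)) ρ := by
    intro e ρ _
    refine integrable_sSup_abs h𝓕c (g := fun _ => (1 / m : ℝ) * ∑ i : Fin m, |B𝓕|) ?_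
      (integrable_const _) (fun _ => by positivity) ?_
    · intro f hf
      have := h𝓕m f hf
      fun_prop
    · intro f hf x
      refine (abs_avg_signs_le e _).trans ?_
      exact mul_le_mul_of_nonneg_left
        (Finset.sum_le_sum fun i _ => (h𝓕b f hf _).trans (le_abs_self _)) (by positivity)
  -- The complexity is defined by sampling from `νS`; it is transferred to samples from `P_S`.
  have hrad : rademacher m 𝓕 νS = ∫ x : Fin m → 𝒳 × ℝ, (1 / 2 ^ m : ℝ) *
      ∑ e : Fin m → Bool, sSup ((fun f : 𝒳 → ℝ =>
        |(1 / m : ℝ) * ∑ i, sgn (e i) * f (x i).1|) '' 𝓕) ∂Q := by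
    refine (integral_prod_signs _ m
      (fun p : (Fin m → 𝒳) × (Fin m → Bool) => sSup ((fun f : 𝒳 → ℝ =>
        |(1 / m : ℝ) * ∑ i, sgn (p.2 i) * f (p.1 i)|) '' 𝓕)) fun e => hH2 e _).trans ?_
    rw [hmap, integral_map hproj.aemeasurable]
    have : IsProbabilityMeasure (Q.map fun x i => (x i).1) := hmap ▸ inferInstance
    exact ((integrable_finsetSum _ fun e _ => hH2 e _).const_mul _).aestronglyMeasurable
  have hH2Q : ∀ e : Fin m → Bool, Integrable (fun x : Fin m → 𝒳 × ℝ => sSup ((fun f : 𝒳 → ℝ =>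
        |(1 / m : ℝ) * ∑ i, sgn (e i) * f (x i).1|) '' 𝓕)) Q := by
    intro e
    have h := hH2 e (Measure.pi fun _ : Fin m => νS)
    rw [hmap] at h
    exact h.comp_measurable hproj
  obtain ⟨hwI, hwE⟩ := integral_sqrt_sum_sq_le P_S m hw2
  obtain ⟨hzI, hzE⟩ := integral_sqrt_sum_sq_le P_S m hy4
  have hνw : ∫ x, w₀ x ^ 2 ∂νS = ∫ p, w₀ p.1 ^ 2 ∂P_S := by
    rw [hνS, integral_map measurable_fst.aemeasurable (by fun_prop)]
  have hzE' : (1 / m : ℝ) * ∫ x : Fin m → 𝒳 × ℝ, √(∑ i, ((x i).2 ^ 2) ^ 2) ∂Q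
      ≤ √((∫ p : 𝒳 × ℝ, p.2 ^ 4 ∂P_S) / m) := by
    rw [Real.sqrt_div' _ (by positivity)]
    simpa only [← pow_mul] using hzE
  have hR0 : 0 ≤ rademacher m 𝓕 νS := integral_nonneg fun p =>
    Real.sSup_nonneg (by rintro _ ⟨f, _, rfl⟩; exact abs_nonneg _)
  have hRI := (integrable_finsetSum Finset.univ fun e _ => hH2Q e).const_mul (1 / 2 ^ m : ℝ)
  have hmain : (∫ x : Fin m → 𝒳 × ℝ, (1 / 2 ^ m : ℝ) * ∑ e : Fin m → Bool,
      sSup ((fun f : 𝒳 → ℝ => |(1 / m : ℝ) * ∑ i, sgn (e i) *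
        (w₀ (x i).1 * max 0 (((x i).2 ^ 2 - f (x i).1) / δ + 1))|) '' 𝓕) ∂Q)
      ≤ √(∫ x, w₀ x ^ 2 ∂νS) / √m + 2 * (W / δ) *
        (√((∫ p : 𝒳 × ℝ, p.2 ^ 4 ∂P_S) / m) + rademacher m 𝓕 νS) := by
    have hA := hwI.const_mul (1 / m : ℝ)
    have hZ := hzI.const_mul (1 / m : ℝ)
    refine (integral_mono ((integrable_finsetSum _ fun e _ => hH1 e).const_mul _)
      (hA.add ((hZ.add hRI).const_mul (2 * (W / δ)))) fun x => ?_).trans ?_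
    · simp only [Pi.add_apply, sSup_image']
      exact hinge_pointwise' (t := fun (f : 𝓕) i => (f : 𝒳 → ℝ) (x i).1)
        (w := fun i => w₀ (x i).1) (z := fun i => (x i).2 ^ 2) hδ hW (fun i => hw₀0 _)
        (fun i => hw₀W _) (fun f i => h𝓕b f f.2 _)
    · rw [integral_add' hA ((hZ.add hRI).const_mul _), integral_const_mul, integral_const_mul,
        integral_add' hZ hRI, integral_const_mul, ← hrad, hνw]
      gcongr
  refine (integral_prod_signs Q m (fun p => sSup ((fun f : 𝒳 → ℝ => |(1 / m : ℝ) *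
    ∑ i, sgn (p.2 i) * (w₀ (p.1 i).1 * max 0 (((p.1 i).2 ^ 2 - f (p.1 i).1) / δ + 1))|) '' 𝓕))
    hH1).trans_le (hmain.trans ?_)
  have hs : (1 : ℝ) ≤ √2 := Real.one_le_sqrt.mpr (by norm_num)
  have hK1 : 1 ≤ (B + W + δ) / δ := by rw [le_div_iff₀ hδ]; linarith
  have hK2 : W / δ ≤ (B + W + δ) / δ := by gcongr; linarith
  have hc1 : 1 ≤ 2 * √2 * ((B + W + δ) / δ) := by nlinarith
  have hc2 : 2 * (W / δ) ≤ 2 * √2 * ((B + W + δ) / δ) := by nlinarith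
  rw [add_assoc (√(∫ x, w₀ x ^ 2 ∂νS) / √m),
    mul_add (2 * √2 * ((B + W + δ) / δ))]
  exact add_le_add (le_mul_of_one_le_left (by positivity) hc1)
    (mul_le_mul_of_nonneg_right hc2 (by positivity))
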